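/- arXiv:2207.08172 — 2 statements merged into one kernel-verified Lean document; each statement's English description precedes it below -/
import Mathlib

section
/- f_{a,b}(z) → 1 as |z| → ∞; more precisely, the function h defined by h(w) = f_{a,b}(1/w) for 0 < |w| < 1/max(|a_0|, |b_0|) and h(0) = 1 is holomorphic on the disc {w ∈ ℂ : |w| < 1/max(|a_0|, |b_0|)} (i.e. f_{a,b} extends holomorphically across the point at infinity with value 1). -/
open Filter Topology

/-- The Cantor-type set 𝒞(a,b) = [a₀,b₀] ∖ ⋃_{i≥1} (aᵢ,bᵢ), viewed as a subset of ℂ. -/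
noncomputable def cantorAB (a b : ℕ → ℝ) : Set ℂ :=
  (fun x : ℝ => (x : ℂ)) '' (Set.Icc (a 0) (b 0) \ ⋃ i : ℕ, Set.Ioo (a (i + 1)) (b (i + 1)))

/-- The partial product f^N(z) = ((z−b₀)/(z−a₀)) ∏_{i=1}^N (z−aᵢ)/(z−bᵢ). -/
noncomputable def partialProd (a b : ℕ → ℝ) (N : ℕ) (z : ℂ) : ℂ :=
  ((z - (b 0 : ℂ)) / (z - (a 0 : ℂ))) *
    ∏ i ∈ Finset.Icc 1 N, ((z - (a i : ℂ)) / (z - (b i : ℂ)))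

/-! In the coordinate `w = 1 / z` the factor `(z - p) / (z - q)` becomes
`(1 - p * w) / (1 - q * w)`, which is holomorphic near `w = 0` with value `1` there, and differs
from `1` by `O(|p - q|)`, locally uniformly in `w`. The gaps `(aᵢ, bᵢ)` are disjoint and lie in a
bounded interval, so their lengths are summable, and the Weierstrass M-test makes the product of
the transformed factors holomorphic on the whole disc, the point `w = 0` included. -/

section Factor

variable {𝕜 : Type*} [NormedField 𝕜] {p q w : 𝕜} {M : ℝ}

theorem one_sub_mul_norm_le_norm_one_sub_mul (hq : ‖q‖ ≤ M) : 1 - M * ‖w‖ ≤ ‖1 - q * w‖ :=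
  calc 1 - M * ‖w‖ ≤ ‖(1 : 𝕜)‖ - ‖q * w‖ := by
        rw [norm_one, norm_mul]
        gcongr
    _ ≤ ‖1 - q * w‖ := norm_sub_norm_le _ _

theorem one_sub_mul_ne_zero (hq : ‖q‖ ≤ M) (hw : M * ‖w‖ < 1) : 1 - q * w ≠ 0 :=
  norm_pos_iff.mp <| (sub_pos.mpr hw).trans_le (one_sub_mul_norm_le_norm_one_sub_mul hq)

theorem norm_one_sub_mul_div_sub_one_le (hq : ‖q‖ ≤ M) (hw : M * ‖w‖ < 1) :
    ‖(1 - p * w) / (1 - q * w) - 1‖ ≤ ‖p - q‖ * (‖w‖ / (1 - M * ‖w‖)) := by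
  have hsub : (1 - p * w) / (1 - q * w) - 1 = (q - p) * w / (1 - q * w) := by
    rw [div_sub_one (one_sub_mul_ne_zero hq hw)]
    ring
  have : 0 < 1 - M * ‖w‖ := sub_pos.mpr hw
  rw [hsub, norm_div, norm_mul, norm_sub_rev, mul_div_assoc]
  gcongr
  exact one_sub_mul_norm_le_norm_one_sub_mul hq

theorem sub_div_sub_eq_one_sub_mul_inv_div {z : 𝕜} (hz : z ≠ 0) :
    (z - p) / (z - q) = (1 - p * z⁻¹) / (1 - q * z⁻¹) := by
  rw [← mul_div_mul_left (1 - p * z⁻¹) (1 - q * z⁻¹) hz]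
  congr 1 <;> field_simp

end Factor

section ProdAtInfty

variable {ι 𝕜 : Type*} [NormedField 𝕜] {M : ℝ}

/-- The infinite product `∏ᵢ (z - p i) / (z - q i)` with zeros `p` and poles `q`, written in the
coordinate `w = 1 / z` so that `w = 0` stands for the point at infinity. -/
noncomputable def prodAtInfty (p q : ι → 𝕜) (w : 𝕜) : 𝕜 :=
  ∏' i, (1 - p i * w) / (1 - q i * w)

theorem prodAtInfty_zero (p q : ι → 𝕜) : prodAtInfty p q 0 = 1 := by
  simp [prodAtInfty]

theorem isOpen_setOf_mul_norm_lt_one (M : ℝ) : IsOpen {w : 𝕜 | M * ‖w‖ < 1} :=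
  isOpen_lt (by fun_prop) continuous_const

theorem hasProdLocallyUniformlyOn_prodAtInfty [ProperSpace 𝕜] {p q : ι → 𝕜}
    (hq : ∀ i, ‖q i‖ ≤ M) (hpq : Summable fun i => ‖p i - q i‖) :
    HasProdLocallyUniformlyOn (fun i w => (1 - p i * w) / (1 - q i * w)) (prodAtInfty p q)
      {w | M * ‖w‖ < 1} := by
  refine hasProdLocallyUniformlyOn_of_forall_compact (isOpen_setOf_mul_norm_lt_one M)
    fun K hKU hK => ?_
  obtain ⟨C, hC⟩ : ∃ C, ∀ w ∈ K, ‖‖w‖ / (1 - M * ‖w‖)‖ ≤ C :=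
    hK.exists_bound_of_continuousOn <| ContinuousOn.div (by fun_prop) (by fun_prop)
      fun w hw => (sub_pos.mpr (hKU hw)).ne'
  have hbound : ∀ i, ∀ w ∈ K, ‖(1 - p i * w) / (1 - q i * w) - 1‖ ≤ ‖p i - q i‖ * C :=
    fun i w hw => (norm_one_sub_mul_div_sub_one_le (hq i) (hKU hw)).trans <| by
      gcongr
      exact (le_abs_self _).trans (hC w hw)
  have hcont : ∀ i, ContinuousOn (fun w => (1 - p i * w) / (1 - q i * w) - 1) K := fun i =>
    (ContinuousOn.div (by fun_prop) (by fun_prop)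
      fun w hw => one_sub_mul_ne_zero (hq i) (hKU hw)).sub continuousOn_const
  simpa only [add_sub_cancel] using!
    (hpq.mul_right C).hasProdUniformlyOn_one_add hK (.of_forall hbound) hcont

theorem hasProd_sub_div_sub_prodAtInfty_inv [ProperSpace 𝕜] {p q : ι → 𝕜}
    (hq : ∀ i, ‖q i‖ ≤ M) (hpq : Summable fun i => ‖p i - q i‖) {z : 𝕜} (hz : M < ‖z‖) :
    HasProd (fun i => (z - p i) / (z - q i)) (prodAtInfty p q z⁻¹) := by
  have hinv : M * ‖z⁻¹‖ < 1 := by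
    rcases eq_or_ne z 0 with rfl | hz0
    · simp
    · rw [norm_inv, ← div_eq_mul_inv]
      exact (div_lt_one (norm_pos_iff.mpr hz0)).mpr hz
  exact ((hasProdLocallyUniformlyOn_prodAtInfty hq hpq).hasProd hinv).congr_fun
    fun i => sub_div_sub_eq_one_sub_mul_inv_div <|
      norm_pos_iff.mp <| (norm_nonneg _).trans_lt ((hq i).trans_lt hz)

theorem differentiableOn_prodAtInfty {p q : ι → ℂ} (hq : ∀ i, ‖q i‖ ≤ M)
    (hpq : Summable fun i => ‖p i - q i‖) :
    DifferentiableOn ℂ (prodAtInfty p q) {w | M * ‖w‖ < 1} := by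
  have hfactor : ∀ i, DifferentiableOn ℂ (fun w => (1 - p i * w) / (1 - q i * w))
      {w | M * ‖w‖ < 1} := fun i =>
    DifferentiableOn.div (by fun_prop) (by fun_prop) fun w hw => one_sub_mul_ne_zero (hq i) hw
  exact (hasProdLocallyUniformlyOn_prodAtInfty hq hpq).differentiableOn
    (.of_forall fun s => DifferentiableOn.fun_finsetProd fun i _ => hfactor i)
    (isOpen_setOf_mul_norm_lt_one M)

theorem tendsto_prodAtInfty_inv_cobounded {p q : ι → ℂ} (hq : ∀ i, ‖q i‖ ≤ M)
    (hpq : Summable fun i => ‖p i - q i‖) :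
    Tendsto (fun z => prodAtInfty p q z⁻¹) (Bornology.cobounded ℂ) (𝓝 1) := by
  have hnhds : {w : ℂ | M * ‖w‖ < 1} ∈ 𝓝 0 :=
    (isOpen_setOf_mul_norm_lt_one M).mem_nhds (by simp)
  have hcont : ContinuousAt (prodAtInfty p q) 0 :=
    ((differentiableOn_prodAtInfty hq hpq).differentiableAt hnhds).continuousAt
  exact prodAtInfty_zero p q ▸ hcont.tendsto.comp tendsto_inv₀_cobounded

end ProdAtInfty

section Gaps

theorem summable_sub_of_pairwise_disjoint_Ioo {ι : Type*} [Countable ι] {a b : ι → ℝ} {s : Set ℝ}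
    (hab : ∀ i, a i ≤ b i) (hsub : ∀ i, Set.Ioo (a i) (b i) ⊆ s)
    (hs : MeasureTheory.volume s ≠ ⊤)
    (hdisj : Pairwise (Function.onFun Disjoint fun i => Set.Ioo (a i) (b i))) :
    Summable fun i => b i - a i := by
  have htsum : ∑' i, MeasureTheory.volume (Set.Ioo (a i) (b i)) ≠ ⊤ := by
    rw [← MeasureTheory.measure_iUnion hdisj fun _ => measurableSet_Ioo]
    exact MeasureTheory.measure_ne_top_of_subset (Set.iUnion_subset hsub) hs
  refine (ENNReal.summable_toReal htsum).congr fun i => ?_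
  rw [Real.volume_Ioo, ENNReal.toReal_ofReal (sub_nonneg.mpr (hab i))]

variable {a b : ℕ → ℝ}

theorem abs_gap_right_le_max_abs_abs (hab : ∀ i, 1 ≤ i → a i ≤ b i)
    (hsub : ∀ i, 1 ≤ i → Set.Icc (a i) (b i) ⊆ Set.Ioo (a 0) (b 0)) (i : ℕ) (hi : 1 ≤ i) :
    |b i| ≤ max |a 0| |b 0| :=
  have hb := hsub i hi (Set.right_mem_Icc.mpr (hab i hi))
  abs_le_max_abs_abs hb.1.le hb.2.le

theorem summable_abs_sub_of_disjoint_gaps (hab : ∀ i, 1 ≤ i → a i ≤ b i)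
    (hsub : ∀ i, 1 ≤ i → Set.Icc (a i) (b i) ⊆ Set.Ioo (a 0) (b 0))
    (hdisj : ∀ i k, 1 ≤ i → 1 ≤ k → i ≠ k →
      Disjoint (Set.Icc (a i) (b i)) (Set.Icc (a k) (b k))) :
    Summable fun i => |a i - b i| := by
  have hle : ∀ i, a (i + 1) ≤ b (i + 1) := fun i => hab _ i.succ_pos
  have hshift : Summable fun i => b (i + 1) - a (i + 1) :=
    summable_sub_of_pairwise_disjoint_Ioo hle
      (fun i => Set.Ioo_subset_Icc_self.trans (hsub _ i.succ_pos)) measure_Ioo_lt_top.ne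
      fun i k hik => (hdisj _ _ i.succ_pos k.succ_pos (by simpa using hik)).mono
        Set.Ioo_subset_Icc_self Set.Ioo_subset_Icc_self
  refine (summable_nat_add_iff 1).mp (hshift.congr fun i => ?_)
  rw [abs_sub_comm, abs_of_nonneg (sub_nonneg.mpr (hle i))]

theorem notMem_cantorAB_of_max_lt_norm {z : ℂ} (hz : max |a 0| |b 0| < ‖z‖) :
    z ∉ cantorAB a b := by
  rintro ⟨x, ⟨hx, -⟩, rfl⟩
  rw [Complex.norm_real, Real.norm_eq_abs] at hz
  exact hz.not_ge (abs_le_max_abs_abs hx.1 hx.2)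

end Gaps

section PartialProd

/-- The complex sequence `b 0, a 1, a 2, …`. The endpoints of the outer interval enter `partialProd`
with the opposite roles to those of the gaps, so its zeros are `swapHead a b` and its poles are
`swapHead b a`. -/
def swapHead (a b : ℕ → ℝ) : ℕ → ℂ
  | 0 => b 0
  | i + 1 => a (i + 1)

theorem norm_swapHead_sub_swapHead (a b : ℕ → ℝ) (i : ℕ) :
    ‖swapHead a b i - swapHead b a i‖ = |a i - b i| := by
  have hnorm (x y : ℝ) : ‖(x : ℂ) - y‖ = |x - y| := by
    rw [← Complex.ofReal_sub, Complex.norm_real, Real.norm_eq_abs]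
  cases i with
  | zero => exact (hnorm (b 0) (a 0)).trans (abs_sub_comm _ _)
  | succ i => exact hnorm (a (i + 1)) (b (i + 1))

theorem summable_norm_swapHead_sub_swapHead {a b : ℕ → ℝ} (hab : Summable fun i => |a i - b i|) :
    Summable fun i => ‖swapHead a b i - swapHead b a i‖ :=
  hab.congr fun i => (norm_swapHead_sub_swapHead a b i).symm

theorem norm_swapHead_le {a b : ℕ → ℝ} {M : ℝ} (hb : |b 0| ≤ M) (ha : ∀ i, 1 ≤ i → |a i| ≤ M)
    (i : ℕ) : ‖swapHead a b i‖ ≤ M := by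
  cases i with
  | zero => simpa only [swapHead, Complex.norm_real, Real.norm_eq_abs] using hb
  | succ i => simpa only [swapHead, Complex.norm_real, Real.norm_eq_abs] using ha _ i.succ_pos

theorem partialProd_eq_prod_range (a b : ℕ → ℝ) (N : ℕ) (z : ℂ) :
    partialProd a b N z =
      ∏ i ∈ Finset.range (N + 1), (z - swapHead a b i) / (z - swapHead b a i) := by
  induction N with
  | zero => simp [partialProd, swapHead]
  | succ N ih =>
    rw [Finset.prod_range_succ, ← ih, partialProd, partialProd,
      Finset.prod_Icc_succ_top N.succ_pos, mul_assoc]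
    rfl

theorem tendsto_partialProd {a b : ℕ → ℝ} {M : ℝ} (ha : |a 0| ≤ M)
    (hb : ∀ i, 1 ≤ i → |b i| ≤ M) (hab : Summable fun i => |a i - b i|) {z : ℂ} (hz : M < ‖z‖) :
    Tendsto (fun N => partialProd a b N z) atTop
      (𝓝 (prodAtInfty (swapHead a b) (swapHead b a) z⁻¹)) := by
  have hprod := hasProd_sub_div_sub_prodAtInfty_inv (norm_swapHead_le ha hb)
    (summable_norm_swapHead_sub_swapHead hab) hz
  simpa only [partialProd_eq_prod_range] using
    (tendsto_add_atTop_iff_nat 1).mpr hprod.tendsto_prod_nat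

end PartialProd

theorem stmt1_general (a b : ℕ → ℝ) {M : ℝ} (ha : |a 0| ≤ M) (hb : ∀ i, 1 ≤ i → |b i| ≤ M)
    (hab : Summable fun i => |a i - b i|) (f : ℂ → ℂ)
    (hf : ∀ z : ℂ, M < ‖z‖ → Tendsto (fun N => partialProd a b N z) atTop (𝓝 (f z))) :
    Tendsto f (Bornology.cobounded ℂ) (𝓝 1) ∧
    DifferentiableOn ℂ (fun w : ℂ => if w = 0 then 1 else f (1 / w)) (Metric.ball 0 (1 / M)) := by
  let h := prodAtInfty (swapHead a b) (swapHead b a)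
  have hpoles := norm_swapHead_le ha hb
  have hdist := summable_norm_swapHead_sub_swapHead hab
  have hfh : ∀ z : ℂ, M < ‖z‖ → f z = h z⁻¹ := fun z hz =>
    tendsto_nhds_unique (hf z hz) (tendsto_partialProd ha hb hab hz)
  constructor
  · refine (tendsto_prodAtInfty_inv_cobounded hpoles hdist).congr' ?_
    filter_upwards [tendsto_norm_cobounded_atTop.eventually_gt_atTop M] with z hz
    exact (hfh z hz).symm
  · have hball : ∀ w ∈ Metric.ball (0 : ℂ) (1 / M), M * ‖w‖ < 1 := fun w hw => by
      rw [mem_ball_zero_iff] at hw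
      exact (lt_div_iff₀' (one_div_pos.mp ((norm_nonneg w).trans_lt hw))).mp hw
    refine ((differentiableOn_prodAtInfty hpoles hdist).mono hball).congr fun w hw => ?_
    split_ifs with hw0
    · rw [hw0, prodAtInfty_zero]
    · have hfar : M < ‖1 / w‖ := by
        rw [norm_div, norm_one]
        exact (lt_div_iff₀ (norm_pos_iff.mpr hw0)).mpr (hball w hw)
      rw [hfh _ hfar, one_div, inv_inv]

/-- f_{a,b}(z) → 1 as |z| → ∞; more precisely, the function
h(w) = f_{a,b}(1/w) (w ≠ 0), h(0) = 1, is holomorphic on the disc of radius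
1/max(|a₀|,|b₀|) around 0, i.e. f_{a,b} extends holomorphically across ∞ with value 1. -/
theorem stmt1 (a b : ℕ → ℝ)
    (hab : ∀ j, a j < b j)
    (hsub : ∀ i, 1 ≤ i → Set.Icc (a i) (b i) ⊆ Set.Ioo (a 0) (b 0))
    (hdisj : ∀ i k, 1 ≤ i → 1 ≤ k → i ≠ k →
      Disjoint (Set.Icc (a i) (b i)) (Set.Icc (a k) (b k)))
    (f : ℂ → ℂ)
    (hf : ∀ z ∉ cantorAB a b,
      Tendsto (fun N => partialProd a b N z) atTop (𝓝 (f z)))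
    (hfdiff : DifferentiableOn ℂ f (cantorAB a b)ᶜ) :
    Tendsto f (Bornology.cobounded ℂ) (𝓝 1) ∧
    DifferentiableOn ℂ (fun w : ℂ => if w = 0 then 1 else f (1 / w))
      (Metric.ball 0 (1 / max |a 0| |b 0|)) := by
  have hle : ∀ i, 1 ≤ i → a i ≤ b i := fun i _ => (hab i).le
  exact stmt1_general a b (le_max_left _ _) (abs_gap_right_le_max_abs_abs hle hsub)
    (summable_abs_sub_of_disjoint_gaps hle hsub hdisj) f
    fun z hz => hf z (notMem_cantorAB_of_max_lt_norm hz)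
end

section
/- For every N ≥ 1 there exists a holomorphic function g̃^N_+ on the open set D̃_N = ((ℂ ∖ ℝ) ∪ (a_0, b_0)) ∖ ⋃_{j=1}^N [a_j, b_j] such that (g̃^N_+(z))² = f^N(z) for all z ∈ D̃_N, g̃^N_+(z) → 1 as |z| → ∞ with Im z > 0, and g̃^N_+(z) → −1 as |z| → ∞ with Im z < 0. Moreover g̃^N_+ = g^N_+ on the upper half-plane {Im z > 0} and g̃^N_+ = −g^N_+ on the lower half-plane {Im z < 0}. -/
open Filter Topology

/-- D_N = ℂ ∖ ([a₀,b₀] ∖ ⋃_{j=1}^N (a_j,b_j)). -/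
noncomputable def domDN (a b : ℕ → ℝ) (N : ℕ) : Set ℂ :=
  ((fun x : ℝ => (x : ℂ)) ''
    (Set.Icc (a 0) (b 0) \ ⋃ j ∈ Set.Icc 1 N, Set.Ioo (a j) (b j)))ᶜ

/-- D̃_N = ((ℂ ∖ ℝ) ∪ (a₀,b₀)) ∖ ⋃_{j=1}^N [a_j,b_j]. -/
noncomputable def domDtildeN (a b : ℕ → ℝ) (N : ℕ) : Set ℂ :=
  ({z : ℂ | z.im ≠ 0} ∪ (fun x : ℝ => (x : ℂ)) '' Set.Ioo (a 0) (b 0)) \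
    ((fun x : ℝ => (x : ℂ)) '' ⋃ j ∈ Set.Icc 1 N, Set.Icc (a j) (b j))

/-!
Each factor `(z - p) / (z - q)` avoids `(-∞, 0]` off the segment `[p, q]`, so its principal square
root is holomorphic there and tends to `1` at infinity. The factor of index `0` would be cut along
the whole of `[a₀, b₀]`; replacing `√w` by `i √(-w)` moves its cut to the two outer rays of the real
axis, and `i √(-w)` is `√w` for `Im w > 0` and `-√w` for `Im w < 0`. On each open half-plane, `g₊`
is the product of the principal roots, since two continuous square roots of a nonvanishing function
on a connected set agree up to sign, and the limit `1` at infinity fixes the sign.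
-/

section Limits

lemma eqOn_of_sq_eqOn_of_tendsto {X 𝕜 : Type*} [TopologicalSpace X] [Field 𝕜] [NeZero (2 : 𝕜)]
    [TopologicalSpace 𝕜] [T2Space 𝕜] [IsTopologicalDivisionRing 𝕜] {s : Set X} {g h : X → 𝕜}
    {l : Filter X} [l.NeBot] {c : 𝕜} (hs : IsPreconnected s) (hsl : s ∈ l)
    (hg : ContinuousOn g s) (hh : ContinuousOn h s) (hsq : Set.EqOn (g ^ 2) (h ^ 2) s)
    (hne : ∀ x ∈ s, h x ≠ 0) (hc : c ≠ 0) (hgc : Tendsto g l (𝓝 c)) (hhc : Tendsto h l (𝓝 c)) :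
    Set.EqOn g h s := by
  refine (hs.eq_or_eq_neg_of_sq_eq hg hh hsq (hne _)).resolve_right fun hneg => hc ?_
  have hgc' : Tendsto g l (𝓝 (-c)) := hhc.neg.congr' (hneg.symm.eventuallyEq_of_mem hsl)
  have hcc : c = -c := tendsto_nhds_unique hgc hgc'
  exact (mul_eq_zero.1 (by linear_combination hcc : 2 * c = 0)).resolve_left two_ne_zero

lemma cobounded_inf_principal_neBot_of_ray {E : Type*} [NormedAddCommGroup E] [NormedSpace ℝ E]
    {s : Set E} {v : E} (hv : v ≠ 0) (hs : ∀ t : ℝ, 0 < t → t • v ∈ s) :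
    (Bornology.cobounded E ⊓ 𝓟 s).NeBot := by
  have hray : Tendsto (fun t : ℝ => t • v) atTop (Bornology.cobounded E) := by
    rw [← tendsto_norm_atTop_iff_cobounded]
    simpa only [norm_smul] using tendsto_norm_atTop_atTop.atTop_mul_const (norm_pos_iff.2 hv)
  exact (tendsto_inf.2 ⟨hray, tendsto_principal.2 ((eventually_gt_atTop 0).mono hs)⟩).neBot

lemma tendsto_sub_div_sub_cobounded {𝕜 : Type*} [NormedField 𝕜] (p q : 𝕜) :
    Tendsto (fun z => (z - p) / (z - q)) (Bornology.cobounded 𝕜) (𝓝 1) := by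
  have hinv : Tendsto (fun z => (z - q)⁻¹) (Bornology.cobounded 𝕜) (𝓝 0) :=
    tendsto_inv₀_cobounded.comp (tendsto_sub_const_cobounded q)
  have hone : Tendsto (fun z => 1 + (q - p) * (z - q)⁻¹) (Bornology.cobounded 𝕜) (𝓝 1) := by
    simpa using (hinv.const_mul (q - p)).const_add 1
  refine hone.congr' ?_
  filter_upwards [Bornology.isBounded_singleton (x := q)] with z hz
  have hzq : z - q ≠ 0 := sub_ne_zero.2 hz
  field_simp
  ring

end Limits

section Sqrt

variable {w : ℂ}

lemma complexSqrt_sq (w : ℂ) : w.sqrt ^ 2 = w :=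
  Complex.cpow_ofNat_inv_pow w 2

lemma differentiableAt_complexSqrt (hw : w ∈ Complex.slitPlane) :
    DifferentiableAt ℂ Complex.sqrt w :=
  differentiableAt_id.cpow_const hw

lemma I_mul_complexSqrt_neg_of_im_pos (hw : 0 < w.im) : Complex.I * (-w).sqrt = w.sqrt := by
  simp only [Complex.sqrt_eq_real_add_ite, norm_neg, Complex.neg_re, Complex.neg_im,
    sub_neg_eq_add, ← sub_eq_add_neg, if_pos hw.le, if_neg (neg_neg_of_pos hw).not_ge]
  linear_combination -(√((‖w‖ + w.re) / 2) : ℂ) * Complex.I_sq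

lemma I_mul_complexSqrt_neg_of_im_neg (hw : w.im < 0) : Complex.I * (-w).sqrt = -w.sqrt := by
  have h := I_mul_complexSqrt_neg_of_im_pos (w := -w) (by simpa using hw)
  rw [neg_neg] at h
  linear_combination -Complex.I * h + w.sqrt * Complex.I_sq

end Sqrt

section Moebius

lemma segment_ofReal (p q : ℝ) :
    segment ℝ (p : ℂ) q = (fun x : ℝ => (x : ℂ)) '' Set.uIcc p q := by
  rw [← segment_eq_uIcc]
  exact (image_segment ℝ Complex.ofRealCLM.toLinearMap.toAffineMap p q).symm

lemma notMem_segment_ofReal_of_im_ne_zero {z : ℂ} (hz : z.im ≠ 0) (p q : ℝ) :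
    z ∉ segment ℝ (p : ℂ) q := by
  rw [segment_ofReal]
  rintro ⟨x, -, rfl⟩
  exact hz (Complex.ofReal_im x)

lemma sub_ofReal_ne_zero_of_im_ne_zero {z : ℂ} (hz : z.im ≠ 0) (p : ℝ) : z - p ≠ 0 := fun h =>
  hz (by simpa using congrArg Complex.im h)

lemma im_sub_div_sub_ofReal (p q : ℝ) (z : ℂ) :
    ((z - p) / (z - q)).im = (p - q) / Complex.normSq (z - q) * z.im := by
  simp only [Complex.div_im, Complex.sub_re, Complex.sub_im, Complex.ofReal_re, Complex.ofReal_im]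
  ring

lemma sub_div_normSq_sub_pos {p q : ℝ} (hpq : q < p) {z : ℂ} (hz : z.im ≠ 0) :
    0 < (p - q) / Complex.normSq (z - q) :=
  div_pos (sub_pos.2 hpq) (Complex.normSq_pos.2 (sub_ofReal_ne_zero_of_im_ne_zero hz q))

open ComplexOrder in
lemma sub_div_sub_mem_slitPlane {p q z : ℂ} (hz : z ∉ segment ℝ p q) :
    (z - p) / (z - q) ∈ Complex.slitPlane := by
  rw [Complex.mem_slitPlane_iff_not_le_zero]
  contrapose! hz
  obtain ⟨r, hr, hrz⟩ := RCLike.nonneg_iff_exists_ofReal.1 (neg_nonneg.2 hz)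
  rcases eq_or_ne z q with rfl | hzq
  · exact right_mem_segment ℝ p z
  have hzpq : z - p = -r * (z - q) := by
    rw [← div_eq_iff (sub_ne_zero.2 hzq)]
    exact (neg_eq_iff_eq_neg.2 hrz).symm
  have hr1 : (1 + r : ℂ) ≠ 0 := by exact_mod_cast (by positivity : (1 + r : ℝ) ≠ 0)
  refine mem_segment_iff_div.2 ⟨1, r, zero_le_one, hr, by positivity, ?_⟩
  simp only [Complex.real_smul, Complex.ofReal_div, Complex.ofReal_add, Complex.ofReal_one]
  field_simp
  linear_combination -hzpq

lemma neg_sub_div_sub_ofReal_mem_slitPlane {p q : ℝ} (hpq : p ≠ q) {z : ℂ}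
    (hz : z ∈ {z : ℂ | z.im ≠ 0} ∪ (fun x : ℝ => (x : ℂ)) '' Set.Ioo p q) :
    -((z - q) / (z - p)) ∈ Complex.slitPlane := by
  rcases hz with him | ⟨x, ⟨hpx, hxq⟩, rfl⟩
  · refine Or.inr ?_
    rw [Complex.neg_im, im_sub_div_sub_ofReal]
    exact neg_ne_zero.2 (mul_ne_zero (div_ne_zero (sub_ne_zero.2 hpq.symm)
      (Complex.normSq_pos.2 (sub_ofReal_ne_zero_of_im_ne_zero him p)).ne') him)
  · have hneg : (x - q) / (x - p) < 0 := div_neg_of_neg_of_pos (sub_neg.2 hxq) (sub_pos.2 hpx)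
    simpa using Complex.neg_ofReal_mem_slitPlane.2 hneg

lemma differentiableAt_sqrt_sub_div_sub {p q z : ℂ} (hz : z ∉ segment ℝ p q) :
    DifferentiableAt ℂ (fun z => ((z - p) / (z - q)).sqrt) z := by
  have hzq : z - q ≠ 0 := sub_ne_zero.2 fun h => hz (h ▸ right_mem_segment ℝ p q)
  exact (differentiableAt_complexSqrt (sub_div_sub_mem_slitPlane hz)).fun_comp' z
    (.fun_div (by fun_prop) (by fun_prop) hzq)

lemma tendsto_sqrt_sub_div_sub_cobounded (p q : ℂ) :
    Tendsto (fun z => ((z - p) / (z - q)).sqrt) (Bornology.cobounded ℂ) (𝓝 1) := by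
  have hsqrt : ContinuousAt Complex.sqrt 1 :=
    (differentiableAt_complexSqrt Complex.one_mem_slitPlane).continuousAt
  simpa using! hsqrt.tendsto.comp (tendsto_sub_div_sub_cobounded p q)

end Moebius

section SqrtProd

variable {ι : Type*} (s : Finset ι) (p q : ι → ℂ)

/-- The product of the principal square roots of `(z - p i) / (z - q i)` over `i ∈ s`: the branch of
the square root of the product which is cut along the segments `[p i, q i]` and is `1` at `∞`. -/
noncomputable def sqrtProd (z : ℂ) : ℂ :=
  ∏ i ∈ s, ((z - p i) / (z - q i)).sqrt

lemma sqrtProd_sq (z : ℂ) : sqrtProd s p q z ^ 2 = ∏ i ∈ s, (z - p i) / (z - q i) := by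
  simp only [sqrtProd, ← Finset.prod_pow, complexSqrt_sq]

variable {s p q} in
lemma differentiableAt_sqrtProd {z : ℂ} (hz : ∀ i ∈ s, z ∉ segment ℝ (p i) (q i)) :
    DifferentiableAt ℂ (sqrtProd s p q) z :=
  .fun_finsetProd fun i hi => differentiableAt_sqrt_sub_div_sub (hz i hi)

lemma tendsto_sqrtProd_cobounded :
    Tendsto (sqrtProd s p q) (Bornology.cobounded ℂ) (𝓝 1) := by
  simpa only [Finset.prod_const_one] using!
    tendsto_finsetProd s fun i _ => tendsto_sqrt_sub_div_sub_cobounded (p i) (q i)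

end SqrtProd

section BandSqrt

variable {p q : ℝ} {z : ℂ}

/-- The square root `i √(-w)` of `w = (z - q) / (z - p)`, whose cut for `p < q` is the complement of
the interval `(p, q)` in the real axis rather than the interval itself. -/
noncomputable def bandSqrt (p q : ℝ) (z : ℂ) : ℂ :=
  Complex.I * (-((z - q) / (z - p))).sqrt

lemma bandSqrt_sq (p q : ℝ) (z : ℂ) : bandSqrt p q z ^ 2 = (z - q) / (z - p) := by
  rw [bandSqrt, mul_pow, complexSqrt_sq, Complex.I_sq, neg_one_mul, neg_neg]

lemma bandSqrt_of_im_pos (hpq : p < q) (hz : 0 < z.im) :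
    bandSqrt p q z = ((z - q) / (z - p)).sqrt := by
  refine I_mul_complexSqrt_neg_of_im_pos ?_
  rw [im_sub_div_sub_ofReal]
  exact mul_pos (sub_div_normSq_sub_pos hpq hz.ne') hz

lemma bandSqrt_of_im_neg (hpq : p < q) (hz : z.im < 0) :
    bandSqrt p q z = -((z - q) / (z - p)).sqrt := by
  refine I_mul_complexSqrt_neg_of_im_neg ?_
  rw [im_sub_div_sub_ofReal]
  exact mul_neg_of_pos_of_neg (sub_div_normSq_sub_pos hpq hz.ne) hz

lemma differentiableAt_bandSqrt (hpq : p ≠ q)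
    (hz : z ∈ {z : ℂ | z.im ≠ 0} ∪ (fun x : ℝ => (x : ℂ)) '' Set.Ioo p q) :
    DifferentiableAt ℂ (bandSqrt p q) z := by
  have hslit := neg_sub_div_sub_ofReal_mem_slitPlane hpq hz
  have hzp : z - p ≠ 0 := fun h => Complex.slitPlane_ne_zero hslit (by rw [h, div_zero, neg_zero])
  have hdiv : DifferentiableAt ℂ (fun z : ℂ => -((z - q) / (z - p))) z :=
    .fun_neg (.fun_div (by fun_prop) (by fun_prop) hzp)
  exact ((differentiableAt_complexSqrt hslit).fun_comp' z hdiv).const_mul Complex.I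

end BandSqrt

section Roots

variable (a b : ℕ → ℝ) (N : ℕ)

/-- The product of the principal square roots of the factors of `partialProd`. Off the real axis it
is the function `g₊` of the paper. -/
noncomputable def principalRoot (z : ℂ) : ℂ :=
  ((z - b 0) / (z - a 0)).sqrt * sqrtProd (Finset.Icc 1 N) (fun i => a i) (fun i => b i) z

/-- The square root of `partialProd` that is holomorphic on `domDtildeN`, the function `g̃₊` of the
paper. -/
noncomputable def bandRoot (z : ℂ) : ℂ :=
  bandSqrt (a 0) (b 0) z * sqrtProd (Finset.Icc 1 N) (fun i => a i) (fun i => b i) z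

lemma principalRoot_sq (z : ℂ) : principalRoot a b N z ^ 2 = partialProd a b N z := by
  rw [principalRoot, mul_pow, complexSqrt_sq, sqrtProd_sq, partialProd]

lemma bandRoot_sq (z : ℂ) : bandRoot a b N z ^ 2 = partialProd a b N z := by
  rw [bandRoot, mul_pow, bandSqrt_sq, sqrtProd_sq, partialProd]

lemma tendsto_principalRoot_cobounded :
    Tendsto (principalRoot a b N) (Bornology.cobounded ℂ) (𝓝 1) := by
  simpa only [mul_one] using!
    (tendsto_sqrt_sub_div_sub_cobounded (b 0) (a 0)).mul (tendsto_sqrtProd_cobounded _ _ _)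

variable {a b N} {z : ℂ}

lemma principalRoot_ne_zero_of_im_ne_zero (hz : z.im ≠ 0) : principalRoot a b N z ≠ 0 := by
  have hdiv (p q : ℝ) : (z - p) / (z - q) ≠ 0 :=
    div_ne_zero (sub_ofReal_ne_zero_of_im_ne_zero hz p) (sub_ofReal_ne_zero_of_im_ne_zero hz q)
  rw [← pow_ne_zero_iff two_ne_zero, principalRoot_sq]
  exact mul_ne_zero (hdiv _ _) (Finset.prod_ne_zero_iff.2 fun i _ => hdiv _ _)

lemma differentiableAt_principalRoot_of_im_ne_zero (hz : z.im ≠ 0) :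
    DifferentiableAt ℂ (principalRoot a b N) z :=
  (differentiableAt_sqrt_sub_div_sub (notMem_segment_ofReal_of_im_ne_zero hz _ _)).fun_mul
    (differentiableAt_sqrtProd fun _ _ => notMem_segment_ofReal_of_im_ne_zero hz _ _)

lemma bandRoot_eq_principalRoot_of_im_pos (h0 : a 0 < b 0) (hz : 0 < z.im) :
    bandRoot a b N z = principalRoot a b N z := by
  rw [bandRoot, bandSqrt_of_im_pos h0 hz, principalRoot]

lemma bandRoot_eq_neg_principalRoot_of_im_neg (h0 : a 0 < b 0) (hz : z.im < 0) :
    bandRoot a b N z = -principalRoot a b N z := by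
  rw [bandRoot, bandSqrt_of_im_neg h0 hz, principalRoot, neg_mul]

lemma notMem_segment_of_mem_domDtildeN (hz : z ∈ domDtildeN a b N) {i : ℕ}
    (hi : i ∈ Finset.Icc 1 N) (hab : a i ≤ b i) : z ∉ segment ℝ (a i : ℂ) (b i) := by
  rw [segment_ofReal, Set.uIcc_of_le hab]
  rintro ⟨x, hx, rfl⟩
  exact hz.2 ⟨x, Set.mem_iUnion₂.2 ⟨i, Finset.mem_Icc.1 hi, hx⟩, rfl⟩

lemma differentiableOn_bandRoot (hab : ∀ j, a j < b j) :
    DifferentiableOn ℂ (bandRoot a b N) (domDtildeN a b N) := fun _ hz =>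
  ((differentiableAt_bandSqrt (hab 0).ne hz.1).fun_mul (differentiableAt_sqrtProd fun i hi =>
    notMem_segment_of_mem_domDtildeN hz hi (hab i).le)).differentiableWithinAt

lemma mem_domDN_of_im_ne_zero (hz : z.im ≠ 0) : z ∈ domDN a b N := by
  rintro ⟨x, -, rfl⟩
  exact hz (Complex.ofReal_im x)

variable {g : ℂ → ℂ}

lemma eqOn_principalRoot_of_isPreconnected {s : Set ℂ} (hs : IsPreconnected s)
    (him : ∀ z ∈ s, z.im ≠ 0) [(Bornology.cobounded ℂ ⊓ 𝓟 s).NeBot] (hg : ContinuousOn g s)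
    (hgsq : ∀ z ∈ s, g z ^ 2 = partialProd a b N z)
    (hglim : Tendsto g (Bornology.cobounded ℂ ⊓ 𝓟 s) (𝓝 1)) :
    Set.EqOn g (principalRoot a b N) s :=
  eqOn_of_sq_eqOn_of_tendsto hs (mem_inf_of_right (mem_principal_self s)) hg
    (fun z hz => (differentiableAt_principalRoot_of_im_ne_zero
      (him z hz)).continuousAt.continuousWithinAt)
    (fun z hz => (hgsq z hz).trans (principalRoot_sq a b N z).symm)
    (fun z hz => principalRoot_ne_zero_of_im_ne_zero (him z hz)) one_ne_zero hglim
    ((tendsto_principalRoot_cobounded a b N).mono_left inf_le_left)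

lemma eq_principalRoot_of_im_ne_zero (hg : ContinuousOn g {z | z.im ≠ 0})
    (hgsq : ∀ z, z.im ≠ 0 → g z ^ 2 = partialProd a b N z)
    (hglim : Tendsto g (Bornology.cobounded ℂ ⊓ 𝓟 {z | z.im ≠ 0}) (𝓝 1)) (hz : z.im ≠ 0) :
    g z = principalRoot a b N z := by
  have heqOn {s : Set ℂ} (hs : Convex ℝ s) (him : s ⊆ {z | z.im ≠ 0}) {v : ℂ} (hv : v ≠ 0)
      (hray : ∀ t : ℝ, 0 < t → t • v ∈ s) : Set.EqOn g (principalRoot a b N) s := by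
    have := cobounded_inf_principal_neBot_of_ray hv hray
    exact eqOn_principalRoot_of_isPreconnected hs.isPreconnected him (hg.mono him)
      (fun z hz => hgsq z (him hz))
      (hglim.mono_left (inf_le_inf_left _ (principal_mono.2 him)))
  rcases hz.lt_or_gt with hneg | hpos
  · exact heqOn (convex_halfSpace_im_lt 0) (fun _ h => ne_of_lt h) (neg_ne_zero.2 Complex.I_ne_zero)
      (fun t ht => by simpa using ht) hneg
  · exact heqOn (convex_halfSpace_im_gt 0) (fun _ h => ne_of_gt h) Complex.I_ne_zero
      (fun t ht => by simpa using ht) hpos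

end Roots

theorem stmt7_general (a b : ℕ → ℝ) (hab : ∀ j, a j < b j) (N : ℕ) (gplus : ℂ → ℂ)
    (hg : ContinuousOn gplus {z | z.im ≠ 0})
    (hgsq : ∀ z, z.im ≠ 0 → gplus z ^ 2 = partialProd a b N z)
    (hglim : Tendsto gplus (Bornology.cobounded ℂ ⊓ 𝓟 {z | z.im ≠ 0}) (𝓝 1)) :
    ∃ gt : ℂ → ℂ,
      DifferentiableOn ℂ gt (domDtildeN a b N) ∧
      (∀ z ∈ domDtildeN a b N, gt z ^ 2 = partialProd a b N z) ∧
      Tendsto gt (Bornology.cobounded ℂ ⊓ 𝓟 {z : ℂ | 0 < z.im}) (𝓝 1) ∧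
      Tendsto gt (Bornology.cobounded ℂ ⊓ 𝓟 {z : ℂ | z.im < 0}) (𝓝 (-1)) ∧
      (∀ z : ℂ, 0 < z.im → gt z = gplus z) ∧
      (∀ z : ℂ, z.im < 0 → gt z = -gplus z) := by
  have hpos (z : ℂ) (hz : 0 < z.im) := bandRoot_eq_principalRoot_of_im_pos (N := N) (hab 0) hz
  have hneg (z : ℂ) (hz : z.im < 0) := bandRoot_eq_neg_principalRoot_of_im_neg (N := N) (hab 0) hz
  have hgplus (z : ℂ) (hz : z.im ≠ 0) := eq_principalRoot_of_im_ne_zero hg hgsq hglim hz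
  have hlim := tendsto_principalRoot_cobounded a b N
  refine ⟨bandRoot a b N, differentiableOn_bandRoot hab, fun z _ => bandRoot_sq a b N z, ?_, ?_,
    fun z hz => (hpos z hz).trans (hgplus z hz.ne').symm,
    fun z hz => (hneg z hz).trans (congrArg Neg.neg (hgplus z hz.ne).symm)⟩
  · exact (hlim.mono_left inf_le_left).congr'
      (eventually_inf_principal.2 (.of_forall fun z hz => (hpos z hz).symm))
  · exact (hlim.neg.mono_left inf_le_left).congr'
      (eventually_inf_principal.2 (.of_forall fun z hz => (hneg z hz).symm))

/-- for every N ≥ 1 there is a holomorphic g̃₊ on D̃_N with g̃₊² = f^N,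
g̃₊ → 1 at ∞ in the upper half-plane, g̃₊ → −1 at ∞ in the lower half-plane, and
g̃₊ = g₊ on {Im z > 0}, g̃₊ = −g₊ on {Im z < 0}. -/
theorem stmt7 (a b : ℕ → ℝ)
    (hab : ∀ j, a j < b j)
    (hsub : ∀ i, 1 ≤ i → Set.Icc (a i) (b i) ⊆ Set.Ioo (a 0) (b 0))
    (hdisj : ∀ i k, 1 ≤ i → 1 ≤ k → i ≠ k →
      Disjoint (Set.Icc (a i) (b i)) (Set.Icc (a k) (b k)))
    (N : ℕ) (hN : 1 ≤ N)
    (gplus : ℂ → ℂ)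
    (hg : DifferentiableOn ℂ gplus (domDN a b N))
    (hgsq : ∀ z ∈ domDN a b N, gplus z ^ 2 = partialProd a b N z)
    (hglim : Tendsto gplus (Bornology.cobounded ℂ) (𝓝 1)) :
    ∃ gt : ℂ → ℂ,
      DifferentiableOn ℂ gt (domDtildeN a b N) ∧
      (∀ z ∈ domDtildeN a b N, gt z ^ 2 = partialProd a b N z) ∧
      Tendsto gt (Bornology.cobounded ℂ ⊓ 𝓟 {z : ℂ | 0 < z.im}) (𝓝 1) ∧
      Tendsto gt (Bornology.cobounded ℂ ⊓ 𝓟 {z : ℂ | z.im < 0}) (𝓝 (-1)) ∧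
      (∀ z : ℂ, 0 < z.im → gt z = gplus z) ∧
      (∀ z : ℂ, z.im < 0 → gt z = -gplus z) := by
  exact stmt7_general a b hab N gplus (hg.continuousOn.mono fun _ => mem_domDN_of_im_ne_zero)
    (fun z hz => hgsq z (mem_domDN_of_im_ne_zero hz)) (hglim.mono_left inf_le_left)
end
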